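/- Let 𝒞 be a hereditary class of finite simple graphs all of whose members are interval graphs. Then 𝒞 has bounded twin-width if and only if there exist p ≥ 1 and a permutation π of {1,…,p} such that no graph in 𝒞 exposes π. -/

import Mathlib

open Finset

def IsHomog {V : Type} (G : SimpleGraph V) (A B : Finset V) : Prop :=
  (∀ a ∈ A, ∀ b ∈ B, G.Adj a b) ∨ (∀ a ∈ A, ∀ b ∈ B, ¬ G.Adj a b)

noncomputable def redDegree {V : Type} [Fintype V] [DecidableEq V] (G : SimpleGraph V)
    (P : Finpartition (univ : Finset V)) (A : Finset V) : ℕ :=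
  letI := Classical.decPred fun B : Finset V => ¬ IsHomog G A B
  ((P.parts.erase A).filter fun B => ¬ IsHomog G A B).card

def IsMerge {V : Type} [Fintype V] [DecidableEq V]
    (P Q : Finpartition (univ : Finset V)) : Prop :=
  ∃ A ∈ P.parts, ∃ B ∈ P.parts, A ≠ B ∧
    Q.parts = insert (A ∪ B) ((P.parts.erase A).erase B)

def TwinWidthLE {V : Type} [Fintype V] [DecidableEq V] (G : SimpleGraph V) (d : ℕ) : Prop :=
  ∃ L : List (Finpartition (univ : Finset V)),
    (∃ P₀, L.head? = some P₀ ∧ ∀ A ∈ P₀.parts, A.card = 1) ∧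
    (∃ P₁, L.getLast? = some P₁ ∧ P₁.parts.card ≤ 1) ∧
    List.Chain' IsMerge L ∧
    ∀ P ∈ L, ∀ A ∈ P.parts, redDegree G P A ≤ d

/-- `G` is an interval graph: vertices carry closed rational intervals, and
distinct vertices are adjacent iff their intervals intersect. -/
def IsIntervalGraph {n : ℕ} (G : SimpleGraph (Fin n)) : Prop :=
  ∃ l r : Fin n → ℚ, (∀ v, l v ≤ r v) ∧
    ∀ u v : Fin n, u ≠ v →
      (G.Adj u v ↔ max (l u) (l v) ≤ min (r u) (r v))

/-- The graph `H` exposes the permutation `π` of `{0, …, p-1}`: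
its vertex set partitions into `W = range w`, `W₁ = range w₁`, `W₂ = range w₂`
(each of size `p`) such that the neighborhoods of the `w i` in `W₁` are
nonempty and strictly increasing along `i`, and the neighborhoods in `W₂` are
nonempty and strictly increasing along `π`. -/
def Exposes {V : Type} {p : ℕ} (H : SimpleGraph V) (π : Equiv.Perm (Fin p)) : Prop :=
  ∃ w w₁ w₂ : Fin p → V,
    Function.Injective w ∧ Function.Injective w₁ ∧ Function.Injective w₂ ∧
    Disjoint (Set.range w) (Set.range w₁) ∧
    Disjoint (Set.range w) (Set.range w₂) ∧
    Disjoint (Set.range w₁) (Set.range w₂) ∧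
    Set.range w ∪ Set.range w₁ ∪ Set.range w₂ = Set.univ ∧
    (∀ i, (H.neighborSet (w i) ∩ Set.range w₁).Nonempty) ∧
    (∀ i, (H.neighborSet (w i) ∩ Set.range w₂).Nonempty) ∧
    (∀ i j : Fin p, i < j →
      H.neighborSet (w i) ∩ Set.range w₁ ⊂ H.neighborSet (w j) ∩ Set.range w₁) ∧
    (∀ i j : Fin p, i < j →
      H.neighborSet (w (π i)) ∩ Set.range w₂ ⊂ H.neighborSet (w (π j)) ∩ Set.range w₂)

def IsInducedSubgraphOf {m n : ℕ} (H : SimpleGraph (Fin m)) (G : SimpleGraph (Fin n)) : Prop :=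
  ∃ f : Fin m ↪ Fin n, ∀ u v, H.Adj u v ↔ G.Adj (f u) (f v)

def Hereditary (C : ∀ n : ℕ, Set (SimpleGraph (Fin n))) : Prop :=
  ∀ (m n : ℕ) (H : SimpleGraph (Fin m)) (G : SimpleGraph (Fin n)),
    G ∈ C n → IsInducedSubgraphOf H G → H ∈ C m

/-
Write the interval of a vertex `v` as a point `(a v, b v)` of the plane, after compressing the
coordinates so that every left endpoint is also a right endpoint and conversely.

If the points contain a `(p + 1)`-grid minor, then any `π` of length `p` is exposed. Choosing the
boxes of the grid along `π` yields vertices `w i` whose right endpoints increase along `i` and whose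
left endpoints decrease along `π`, all intervals overlapping. Vertices `x i` starting where `w i`
ends and vertices `y i` ending where `w (π i)` starts complete them to the two required half graphs.
If there is no large grid minor, the Marcus–Tardos theorem bounds the number of distinct points
linearly in the number of labels, also after identifying consecutive labels. So some two
consecutive labels always have few points in their rows and columns, and identifying them keeps the
red degree of the partition into points bounded.

Conversely, in a contraction sequence of width `t` the vertices on one side of a half graph that lie
in one part are close in its order, as long as no part contains many vertices of the other side: all
vertices of the other side that separate them lie in the part itself or in its red neighbours. For a
permutation `π` that moves close indices far apart, two of the `w i` are never close in both orders,
so no two of them are ever contracted.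
-/

section GridMinor

variable {V α β : Type*}

/-- A `k`-grid minor of the planar point family `v ↦ (a v, b v)`: vertical and horizontal lines cut
the plane into `k × k` boxes that all contain a point. It is encoded by one index `P i j` for the
box in the `i`-th strip of the first coordinate and the `j`-th strip of the second. -/
def HasGridMinor [LT α] [LT β] (k : ℕ) (a : V → α) (b : V → β) : Prop :=
  ∃ P : Fin k → Fin k → V,
    (∀ i i' j j', i < i' → a (P i j) < a (P i' j')) ∧
    (∀ i i' j j', j < j' → b (P i j) < b (P i' j'))

theorem HasGridMinor.of_monotone_comp [LinearOrder α] [LinearOrder β] {α' β' : Type*}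
    [Preorder α'] [Preorder β'] {k : ℕ} {a : V → α} {b : V → β} {f : α → α'} {g : β → β'}
    (h : HasGridMinor k (f ∘ a) (g ∘ b)) (hf : Monotone f) (hg : Monotone g) :
    HasGridMinor k a b :=
  let ⟨P, hrow, hcol⟩ := h
  ⟨P, fun i i' j j' hi => hf.reflect_lt (hrow i i' j j' hi),
    fun i i' j j' hj => hg.reflect_lt (hcol i i' j j' hj)⟩

theorem HasGridMinor.swap [LT α] [LT β] {k : ℕ} {a : V → α} {b : V → β}
    (h : HasGridMinor k a b) : HasGridMinor k b a :=
  let ⟨P, hrow, hcol⟩ := h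
  ⟨fun i j => P j i, fun i i' j j' hi => hcol j j' i i' hi, fun i i' j j' hj => hrow j j' i i' hj⟩

-- Pigeonhole: more than `2 ^ #I * k` rows contain `k` rows with the same column set.
theorem card_le_of_not_hasGridMinor [LinearOrder α] [LinearOrder β] {k : ℕ} {a : V → α}
    {b : V → β} (h : ¬ HasGridMinor k a b) {I : Finset β} {T : Finset α} {c : α → Finset β}
    (hcI : ∀ x ∈ T, c x ⊆ I) (hck : ∀ x ∈ T, k ≤ #(c x))
    (hc : ∀ x ∈ T, ∀ y ∈ c x, ∃ v, a v = x ∧ b v = y) : #T ≤ 2 ^ #I * k := by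
  by_contra! hT
  obtain ⟨s, -, hs⟩ := exists_lt_card_fiber_of_mul_lt_card_of_maps_to (t := I.powerset)
    (fun x hx => mem_powerset.2 (hcI x hx)) (by rwa [card_powerset])
  set U := {x ∈ T | c x = s}
  have hmem : ∀ x ∈ U, x ∈ T ∧ c x = s := fun x hx => mem_filter.1 hx
  have hsk : k ≤ #s := by
    obtain ⟨x, hx⟩ : U.Nonempty := card_pos.1 (by omega)
    exact (hmem x hx).2 ▸ hck x (hmem x hx).1
  let row := orderEmbOfCardLe U hs.le
  let col := orderEmbOfCardLe s hsk
  have hpoint : ∀ i j, ∃ v, a v = row i ∧ b v = col j := by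
    intro i j
    obtain ⟨hT, hs⟩ := hmem (row i) (orderEmbOfCardLe_mem U _ i)
    exact hc _ hT _ (hs ▸ orderEmbOfCardLe_mem s hsk j)
  choose P hrow hcol using hpoint
  refine h ⟨P, fun i i' j j' hi => ?_, fun i i' j j' hj => ?_⟩
  · rw [hrow, hrow]
    exact row.strictMono hi
  · rw [hcol, hcol]
    exact col.strictMono hj

end GridMinor

section MarcusTardos

variable {V : Type*} [Fintype V]

/-- The set of points of the family `v ↦ (a v, b v)`, without multiplicity. -/
def cells (a b : V → ℕ) : Finset (ℕ × ℕ) := univ.image fun v => (a v, b v)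

theorem card_cells_le_mul {a b : V → ℕ} {m n : ℕ} (ha : ∀ v, a v < m) (hb : ∀ v, b v < n) :
    #(cells a b) ≤ m * n := by
  have hsub : cells a b ⊆ range m ×ˢ range n := by
    simp [cells, subset_iff, ha, hb]
  simpa using card_le_card hsub

/-- The values of `b` at the points of the block `(x, y)` when the plane is divided into `K × K`
blocks; the values of `a` there are `blockValues K b a y x`. -/
def blockValues (K : ℕ) (a b : V → ℕ) (x y : ℕ) : Finset ℕ :=
  ({v | a v / K = x ∧ b v / K = y} : Finset V).image b

theorem mem_blockValues {K : ℕ} {a b : V → ℕ} {x y z : ℕ} :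
    z ∈ blockValues K a b x y ↔ ∃ v, (a v / K = x ∧ b v / K = y) ∧ b v = z := by
  simp [blockValues]

theorem blockValues_subset_Ico {K : ℕ} (hK : 0 < K) (a b : V → ℕ) (x y : ℕ) :
    blockValues K a b x y ⊆ Ico (y * K) (y * K + K) := by
  intro z hz
  obtain ⟨v, ⟨-, rfl⟩, rfl⟩ := mem_blockValues.1 hz
  exact mem_Ico.2 ⟨Nat.div_mul_le_self _ _, Nat.lt_div_mul_add hK⟩

theorem card_blockValues_le {K : ℕ} (hK : 0 < K) (a b : V → ℕ) (x y : ℕ) :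
    #(blockValues K a b x y) ≤ K := by
  simpa using card_le_card (blockValues_subset_Ico hK a b x y)

theorem card_cells_le_sum_blocks (K : ℕ) (a b : V → ℕ) :
    #(cells a b) ≤ ∑ B ∈ cells (a · / K) (b · / K),
      #(blockValues K b a B.2 B.1) * #(blockValues K a b B.1 B.2) := by
  have hsub : cells a b ⊆ (cells (a · / K) (b · / K)).biUnion fun B =>
      blockValues K b a B.2 B.1 ×ˢ blockValues K a b B.1 B.2 := by
    intro z hz
    obtain ⟨v, -, rfl⟩ := mem_image.1 hz
    refine mem_biUnion.2 ⟨(a v / K, b v / K), mem_image_of_mem _ (mem_univ v),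
      mem_product.2 ⟨?_, ?_⟩⟩ <;>
    exact mem_blockValues.2 ⟨v, ⟨rfl, rfl⟩, rfl⟩
  simpa only [card_product] using (card_le_card hsub).trans card_biUnion_le

variable {k K n : ℕ} {a b : V → ℕ}

theorem card_wide_blocks_le (hK : 0 < K) (h : ¬ HasGridMinor k a b) (hb : ∀ v, b v / K < n) :
    #{B ∈ cells (a · / K) (b · / K) | k ≤ #(blockValues K a b B.1 B.2)} ≤ 2 ^ K * k * n := by
  have hcoarse : ¬ HasGridMinor k (a · / K) b := fun h' =>
    h (h'.of_monotone_comp (f := (· / K)) (g := id) (fun _ _ => Nat.div_le_div_right) monotone_id)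
  rw [← card_range n]
  refine card_le_mul_card_image_of_maps_to (f := Prod.snd) ?_ _ fun y _ => ?_
  · simp [cells, hb]
  set T := {B ∈ {B ∈ cells (a · / K) (b · / K) | k ≤ #(blockValues K a b B.1 B.2)} | B.2 = y}
    with hT
  have hinj : Set.InjOn Prod.fst (T : Set (ℕ × ℕ)) := by
    intro B hB B' hB' hfst
    exact Prod.ext hfst ((mem_filter.1 hB).2.trans (mem_filter.1 hB').2.symm)
  have hwide : ∀ x ∈ T.image Prod.fst, k ≤ #(blockValues K a b x y) := by
    simp only [hT, mem_image, mem_filter]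
    rintro x ⟨B, ⟨⟨-, hB⟩, rfl⟩, rfl⟩
    exact hB
  calc #T = #(T.image Prod.fst) := (card_image_of_injOn hinj).symm
    _ ≤ 2 ^ #(Ico (y * K) (y * K + K)) * k :=
        card_le_of_not_hasGridMinor hcoarse (fun x _ => blockValues_subset_Ico hK a b x y) hwide
          fun x _ z hz => let ⟨v, hv, hvz⟩ := mem_blockValues.1 hz; ⟨v, hv.1, hvz⟩
    _ = 2 ^ K * k := by simp

theorem card_tall_blocks_le (hK : 0 < K) (h : ¬ HasGridMinor k a b) (ha : ∀ v, a v / K < n) :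
    #{B ∈ cells (a · / K) (b · / K) | k ≤ #(blockValues K b a B.2 B.1)} ≤ 2 ^ K * k * n := by
  refine le_trans (card_le_card_of_injOn Prod.swap ?_ Prod.swap_injective.injOn)
    (card_wide_blocks_le hK (fun h' => h h'.swap) ha)
  rintro ⟨x, y⟩ hB
  obtain ⟨hcell, htall⟩ := mem_filter.1 hB
  obtain ⟨v, -, hv⟩ := mem_image.1 hcell
  obtain ⟨rfl, rfl⟩ := Prod.mk.inj hv
  exact mem_filter.2 ⟨mem_image_of_mem _ (mem_univ v), htall⟩

-- Blocks that are neither wide nor tall contain at most `k * k` points, the others at most `K * K`.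
theorem card_cells_le_of_blocks (hK : 0 < K) (h : ¬ HasGridMinor (k + 1) a b)
    (ha : ∀ v, a v / K < n) (hb : ∀ v, b v / K < n) :
    #(cells a b) ≤
      k * k * #(cells (a · / K) (b · / K)) + 2 * (2 ^ K * (k + 1) * n) * (K * K) := by
  have hblock : ∀ B ∈ cells (a · / K) (b · / K),
      #(blockValues K b a B.2 B.1) * #(blockValues K a b B.1 B.2) ≤
        k * k + ((if k + 1 ≤ #(blockValues K a b B.1 B.2) then K * K else 0) +
          (if k + 1 ≤ #(blockValues K b a B.2 B.1) then K * K else 0)) := by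
    intro B _
    have hlarge := Nat.mul_le_mul (card_blockValues_le hK b a B.2 B.1)
      (card_blockValues_le hK a b B.1 B.2)
    split_ifs with hwide htall htall
    · omega
    · omega
    · omega
    · have hsmall := Nat.mul_le_mul (Nat.lt_succ_iff.1 (not_le.1 htall))
        (Nat.lt_succ_iff.1 (not_le.1 hwide))
      omega
  have hsum := (card_cells_le_sum_blocks K a b).trans (sum_le_sum hblock)
  simp only [sum_add_distrib, sum_const, smul_eq_mul, ← sum_filter] at hsum
  have hwide := Nat.mul_le_mul_right (K * K) (card_wide_blocks_le hK h hb)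
  have htall := Nat.mul_le_mul_right (K * K) (card_tall_blocks_le hK h ha)
  linarith

/-- A constant for the Marcus–Tardos theorem for `(k + 1)`-grid minors; the blocks of the proof have
side `(k + 2) ^ 2`. -/
def marcusTardosConst (k : ℕ) : ℕ :=
  let K := (k + 2) ^ 2
  K * K + 2 * (2 ^ K * (k + 1)) * (K * K) * (K + 1)

theorem marcusTardosConst_recursion (k n : ℕ) (hn : (k + 2) ^ 2 * (k + 2) ^ 2 < n) :
    k * k * (marcusTardosConst k * (n / (k + 2) ^ 2 + 1)) +
      2 * (2 ^ (k + 2) ^ 2 * (k + 1) * (n / (k + 2) ^ 2 + 1)) * ((k + 2) ^ 2 * (k + 2) ^ 2) ≤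
    marcusTardosConst k * n := by
  have hC : marcusTardosConst k = (k + 2) ^ 2 * (k + 2) ^ 2 +
    2 * (2 ^ (k + 2) ^ 2 * (k + 1)) * ((k + 2) ^ 2 * (k + 2) ^ 2) * ((k + 2) ^ 2 + 1) := rfl
  have hkK : k * k * ((k + 2) ^ 2 + 1) + 1 ≤ (k + 2) ^ 2 * (k + 2) ^ 2 := by nlinarith
  have hK : 0 < (k + 2) ^ 2 := by positivity
  set K := (k + 2) ^ 2
  set C := marcusTardosConst k
  set D := 2 * (2 ^ K * (k + 1)) * (K * K)
  set m := n / K + 1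
  have hm : m * (K * K) ≤ (K + 1) * n := by
    have hmK : m * K ≤ n + K := by
      rw [add_one_mul]
      exact Nat.add_le_add_right (Nat.div_mul_le_self n K) K
    nlinarith
  have hCD : (k * k * C + D) * (K + 1) ≤ C * (K * K) := by
    nlinarith [Nat.mul_le_mul_left C hkK]
  refine Nat.le_of_mul_le_mul_right (c := K * K) ?_ (Nat.mul_pos hK hK)
  calc (k * k * (C * m) + 2 * (2 ^ K * (k + 1) * m) * (K * K)) * (K * K)
      = (k * k * C + D) * (m * (K * K)) := by ring
    _ ≤ (k * k * C + D) * ((K + 1) * n) := Nat.mul_le_mul_left _ hm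
    _ = (k * k * C + D) * (K + 1) * n := by ring
    _ ≤ C * (K * K) * n := Nat.mul_le_mul_right _ hCD
    _ = C * n * (K * K) := by ring

theorem card_cells_le_marcusTardosConst_mul (ha : ∀ v, a v < n) (hb : ∀ v, b v < n)
    (h : ¬ HasGridMinor (k + 1) a b) : #(cells a b) ≤ marcusTardosConst k * n := by
  induction n using Nat.strong_induction_on generalizing a b with
  | _ n ih =>
  have hK4 : 2 ^ 2 ≤ (k + 2) ^ 2 := Nat.pow_le_pow_left (Nat.le_add_left 2 k) 2
  set K := (k + 2) ^ 2
  rcases le_or_gt n (K * K) with hn | hn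
  · calc #(cells a b) ≤ n * n := card_cells_le_mul ha hb
      _ ≤ K * K * n := Nat.mul_le_mul_right _ hn
      _ ≤ marcusTardosConst k * n := Nat.mul_le_mul_right _ (Nat.le_add_right _ _)
  have hcoarse : ¬ HasGridMinor (k + 1) (a · / K) (b · / K) := fun h' =>
    h (h'.of_monotone_comp (f := (· / K)) (g := (· / K)) (fun _ _ => Nat.div_le_div_right)
      fun _ _ => Nat.div_le_div_right)
  have hdiv : ∀ x < n, x / K < n / K + 1 := fun x hx =>
    Nat.lt_succ_of_le (Nat.div_le_div_right hx.le)
  have hlt : n / K + 1 < n := by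
    have : n / K ≤ n / 4 := Nat.div_le_div_left hK4 (by norm_num)
    have : 4 * 4 ≤ K * K := Nat.mul_le_mul hK4 hK4
    omega
  have hcard := ih _ hlt (fun v => hdiv _ (ha v)) (fun v => hdiv _ (hb v)) hcoarse
  calc #(cells a b)
      ≤ k * k * #(cells (a · / K) (b · / K)) + 2 * (2 ^ K * (k + 1) * (n / K + 1)) * (K * K) :=
        card_cells_le_of_blocks (by omega) h (fun v => hdiv _ (ha v)) fun v => hdiv _ (hb v)
    _ ≤ k * k * (marcusTardosConst k * (n / K + 1)) +
          2 * (2 ^ K * (k + 1) * (n / K + 1)) * (K * K) := by gcongr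
    _ ≤ marcusTardosConst k * n := marcusTardosConst_recursion k n hn

end MarcusTardos

section FiberPartition

variable {V : Type*} [Fintype V] [DecidableEq V] {β γ : Type*} [DecidableEq β] [DecidableEq γ]

/-- The partition of the vertex set into the nonempty fibers of the labelling `f`. -/
def fiberPartition (f : V → β) : Finpartition (univ : Finset V) :=
  letI : DecidableRel (Setoid.ker f) := fun u v => decEq (f u) (f v)
  Finpartition.ofSetoid (Setoid.ker f)

theorem mem_iff_of_mem_fiberPartition {f : V → β} {A : Finset V}
    (hA : A ∈ (fiberPartition f).parts) {x y : V} (hx : x ∈ A) : y ∈ A ↔ f x = f y := by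
  let _ : DecidableRel (Setoid.ker f) := fun u v => decEq (f u) (f v)
  rw [← (fiberPartition f).part_eq_of_mem hA hx]
  exact Finpartition.mem_part_ofSetoid_iff_rel

theorem fiberPartition_mono {f : V → β} {g : V → γ} (h : ∀ u v, f u = f v → g u = g v) :
    fiberPartition f ≤ fiberPartition g := by
  intro A hA
  obtain ⟨x, hx⟩ := (fiberPartition f).nonempty_of_mem_parts hA
  obtain ⟨B, hB, hxB⟩ := (fiberPartition g).exists_mem (mem_univ x)
  exact ⟨B, hB, fun y hy => (mem_iff_of_mem_fiberPartition hB hxB).2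
    (h _ _ ((mem_iff_of_mem_fiberPartition hA hx).1 hy))⟩

theorem card_parts_fiberPartition_le_one {f : V → β} (h : ∀ u v, f u = f v) :
    #(fiberPartition f).parts ≤ 1 := by
  refine card_le_one.2 fun A hA B hB => ?_
  obtain ⟨x, hx⟩ := (fiberPartition f).nonempty_of_mem_parts hA
  obtain ⟨y, hy⟩ := (fiberPartition f).nonempty_of_mem_parts hB
  exact (fiberPartition f).eq_of_mem_parts hA hB hx
    ((mem_iff_of_mem_fiberPartition hB hy).2 (h y x))

theorem eq_of_le_fiberPartition {f : V → β} {R : Finpartition (univ : Finset V)}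
    (hR : R ≤ fiberPartition f) {A : Finset V} (hA : A ∈ R.parts) {x y : V} (hx : x ∈ A)
    (hy : y ∈ A) : f x = f y := by
  obtain ⟨B, hB, hAB⟩ := hR hA
  exact (mem_iff_of_mem_fiberPartition hB (hAB hx)).1 (hAB hy)

theorem eq_of_fiberPartition_le {f : V → β} {R : Finpartition (univ : Finset V)}
    (hR : fiberPartition f ≤ R) {A B : Finset V} (hA : A ∈ R.parts) (hB : B ∈ R.parts) {x y : V}
    (hx : x ∈ A) (hy : y ∈ B) (hxy : f x = f y) : A = B := by
  obtain ⟨C, hC, hxC⟩ := (fiberPartition f).exists_mem (mem_univ x)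
  obtain ⟨D, hD, hCD⟩ := hR hC
  have hyC : y ∈ C := (mem_iff_of_mem_fiberPartition hC hxC).2 hxy
  exact (R.eq_of_mem_parts hA hD hx (hCD hxC)).trans (R.eq_of_mem_parts hB hD hy (hCD hyC)).symm

end FiberPartition

section ContractionSequence

variable {V : Type} [Fintype V] [DecidableEq V] {P Q R : Finpartition (univ : Finset V)}

theorem redDegree_eq_card {G : SimpleGraph V} {A : Finset V}
    [DecidablePred fun B => ¬ IsHomog G A B] :
    redDegree G P A = #{B ∈ P.parts.erase A | ¬ IsHomog G A B} := by
  unfold redDegree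
  congr

theorem exists_isMerge_parts_eq {A B : Finset V} (hA : A ∈ P.parts) (hB : B ∈ P.parts)
    (hAB : A ≠ B) :
    ∃ R, IsMerge P R ∧ R.parts = insert (A ∪ B) ((P.parts.erase A).erase B) := by
  have hBA : B ∈ P.parts.erase A := mem_erase.2 ⟨hAB.symm, hB⟩
  have hdisj : Disjoint (((P.parts.erase A).erase B).sup id) (A ∪ B) := by
    simp only [Finset.disjoint_sup_left, mem_erase]
    rintro D ⟨hDB, hDA, hD⟩
    exact disjoint_union_right.2 ⟨P.disjoint hD hA hDA, P.disjoint hD hB hDB⟩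
  have hsup : ((P.parts.erase A).erase B).sup id ⊔ (A ∪ B) = univ := by
    refine Eq.trans ?_ P.sup_parts
    conv_rhs => rw [← insert_erase hA, ← insert_erase hBA]
    simp only [sup_insert, id, sup_eq_union]
    rw [union_comm, union_assoc]
  let R := (P.ofSubset ((erase_subset _ _).trans (erase_subset _ _)) rfl).extend
    (fun h => P.ne_bot hA (union_eq_empty.1 h).1) hdisj hsup
  exact ⟨R, ⟨A, hA, B, hB, hAB, rfl⟩, rfl⟩

theorem IsMerge.lt (h : IsMerge P R) : P < R := by
  obtain ⟨A, hA, B, hB, hAB, hR⟩ := h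
  refine lt_of_le_not_ge (fun D hD => ?_) fun hRP => ?_
  · by_cases hDA : D = A
    · exact ⟨A ∪ B, hR ▸ mem_insert_self _ _, hDA ▸ subset_union_left⟩
    by_cases hDB : D = B
    · exact ⟨A ∪ B, hR ▸ mem_insert_self _ _, hDB ▸ subset_union_right⟩
    · exact ⟨D, by simp [hR, hDA, hDB, hD], subset_rfl⟩
  · obtain ⟨D, hD, hABD⟩ := hRP (hR ▸ mem_insert_self (A ∪ B) _)
    obtain ⟨x, hx⟩ := P.nonempty_of_mem_parts hA
    obtain ⟨y, hy⟩ := P.nonempty_of_mem_parts hB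
    exact hAB ((P.eq_of_mem_parts hA hD hx (hABD (mem_union_left _ hx))).trans
      (P.eq_of_mem_parts hB hD hy (hABD (mem_union_right _ hy))).symm)

theorem exists_isMerge_le_of_lt (h : P < Q) : ∃ R, IsMerge P R ∧ R ≤ Q := by
  obtain ⟨hPQ, hQP⟩ := lt_iff_le_not_ge.1 h
  obtain ⟨C, hC, hCP⟩ : ∃ C ∈ Q.parts, ∀ A ∈ P.parts, ¬ C ⊆ A := by
    by_contra! hsub
    exact hQP fun C hC => hsub C hC
  obtain ⟨x, hx⟩ := Q.nonempty_of_mem_parts hC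
  have hpart : ∀ z ∈ C, P.part z ⊆ C := by
    intro z hz
    obtain ⟨C', hC', hzC'⟩ := hPQ (P.part_mem.2 (mem_univ z))
    rwa [Q.eq_of_mem_parts hC hC' hz (hzC' (P.mem_part (mem_univ z)))]
  obtain ⟨y, hy, hyx⟩ := not_subset.1 (hCP _ (P.part_mem.2 (mem_univ x)))
  have hne : P.part x ≠ P.part y := fun h => hyx (h ▸ P.mem_part (mem_univ y))
  obtain ⟨R, hPR, hR⟩ := exists_isMerge_parts_eq (P.part_mem.2 (mem_univ x))
    (P.part_mem.2 (mem_univ y)) hne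
  refine ⟨R, hPR, fun D hD => ?_⟩
  rw [hR] at hD
  rcases mem_insert.1 hD with rfl | hD
  · exact ⟨C, hC, union_subset (hpart x hx) (hpart y hy)⟩
  · exact hPQ (mem_of_mem_erase (mem_of_mem_erase hD))

/-- `ContractsTo G d P Q`: a contraction sequence of `G`, seen as a sequence of merges of parts,
leads from the partition `P` to `Q`, and all partitions after `P` have red degree at most `d`. -/
def ContractsTo (G : SimpleGraph V) (d : ℕ) :
    Finpartition (univ : Finset V) → Finpartition (univ : Finset V) → Prop :=
  Relation.ReflTransGen fun R S => IsMerge R S ∧ ∀ A ∈ S.parts, redDegree G S A ≤ d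

theorem contractsTo_of_le {G : SimpleGraph V} {d : ℕ} (hPQ : P ≤ Q)
    (hred : ∀ R, P ≤ R → R ≤ Q → ∀ A ∈ R.parts, redDegree G R A ≤ d) : ContractsTo G d P Q := by
  induction P using WellFoundedGT.induction with
  | _ P ih =>
  rcases hPQ.eq_or_lt with rfl | hlt
  · exact .refl
  obtain ⟨R, hPR, hRQ⟩ := exists_isMerge_le_of_lt hlt
  exact .head ⟨hPR, hred R hPR.lt.le hRQ⟩
    (ih R hPR.lt hRQ fun S hRS => hred S (hPR.lt.le.trans hRS))

theorem twinWidthLE_iff_contractsTo {G : SimpleGraph V} {d : ℕ} :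
    TwinWidthLE G d ↔ ∃ P Q : Finpartition (univ : Finset V), (∀ A ∈ P.parts, #A = 1) ∧
      #Q.parts ≤ 1 ∧ (∀ A ∈ P.parts, redDegree G P A ≤ d) ∧ ContractsTo G d P Q := by
  constructor
  · rintro ⟨L, ⟨P, hhead, hP⟩, ⟨Q, hlast, hQ⟩, hchain, hred⟩
    obtain ⟨L, rfl⟩ := List.head?_eq_some_iff.1 hhead
    refine ⟨P, Q, hP, hQ, hred P List.mem_cons_self,
      List.relationReflTransGen_of_exists_isChain_cons L
        (hchain.imp_of_mem_imp fun R S _ hS hRS => ⟨hRS, hred S hS⟩) ?_⟩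
    exact Option.some_inj.1 ((List.getLast?_eq_some_getLast _).symm.trans hlast)
  · rintro ⟨P, Q, hP, hQ, hred, hPQ⟩
    obtain ⟨L, hchain, hlast⟩ := List.exists_isChain_cons_of_relationReflTransGen hPQ
    refine ⟨P :: L, ⟨P, rfl, hP⟩, ⟨Q, ?_, hQ⟩, hchain.imp fun _ _ h => h.1, ?_⟩
    · rw [List.getLast?_eq_some_getLast (List.cons_ne_nil _ _), hlast]
    · exact hchain.induction (fun R => ∀ A ∈ R.parts, redDegree G R A ≤ d) _
        (fun _ _ h _ => h.2) fun _ => hred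

end ContractionSequence

section CoarseRepresentation

variable {V : Type*} {G : SimpleGraph V} {a b : V → ℕ} {D : ℕ}

/-- The intervals `[a v, b v]` represent `G` as an interval graph. -/
structure IsIntervalRep {α : Type*} [LE α] (G : SimpleGraph V) (a b : V → α) : Prop where
  le : ∀ v, a v ≤ b v
  adj_iff : ∀ u v, u ≠ v → (G.Adj u v ↔ a u ≤ b v ∧ a v ≤ b u)

/-- The label `k` is clean if every right endpoint at `k` belongs to a vertex adjacent to all
vertices with left endpoint at `k`, as in an interval representation. -/
def CleanAt (G : SimpleGraph V) (a b : V → ℕ) (k : ℕ) : Prop :=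
  ∀ u v, u ≠ v → b u = k → a v = k → G.Adj u v

theorem IsIntervalRep.cleanAt (h : IsIntervalRep G a b) (k : ℕ) : CleanAt G a b k := by
  intro u v huv hu hv
  rw [h.adj_iff u v huv]
  have := h.le u
  have := h.le v
  omega

variable [Fintype V]

/-- The values of `b` at the points with `a v = k`; they correspond to the cells in row `k`, and
those in column `k` to `fiberValues b a k`. -/
def fiberValues (a b : V → ℕ) (k : ℕ) : Finset ℕ :=
  ({v | a v = k} : Finset V).image b

/-- What is left of an interval representation after identifying labels: adjacency is still decided
by the order of the endpoints unless two endpoints coincide in an unclean label `k`, and rows and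
columns with unclean labels have at most `D` cells. -/
structure IsCoarseRep (G : SimpleGraph V) (D : ℕ) (a b : V → ℕ) : Prop where
  not_adj : ∀ u v, b u < a v → ¬ G.Adj u v
  adj : ∀ u v, u ≠ v → a v < b u → a u < b v → G.Adj u v
  card_row_le : ∀ k, ¬ CleanAt G a b k → #(fiberValues a b k) ≤ D
  card_col_le : ∀ k, ¬ CleanAt G a b k → #(fiberValues b a k) ≤ D

theorem mem_fiberValues {k z : ℕ} : z ∈ fiberValues a b k ↔ ∃ v, a v = k ∧ b v = z := by
  simp [fiberValues]

theorem IsIntervalRep.isCoarseRep (h : IsIntervalRep G a b) (D : ℕ) : IsCoarseRep G D a b where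
  not_adj u v huv hadj := huv.not_ge ((h.adj_iff u v hadj.ne).1 hadj).2
  adj u v huv hvu huv' := (h.adj_iff u v huv).2 ⟨huv'.le, hvu.le⟩
  card_row_le k hk := absurd (h.cleanAt k) hk
  card_col_le k hk := absurd (h.cleanAt k) hk

/-- The contraction of the labels `i` and `i + 1` of `ℕ` into `i`. -/
def glue (i x : ℕ) : ℕ := if x ≤ i then x else x - 1

theorem glue_mono (i : ℕ) : Monotone (glue i) := by
  intro x y hxy
  unfold glue
  split_ifs <;> omega

theorem mem_pair_glue (i x : ℕ) : x ∈ ({glue i x, glue i x + 1} : Finset ℕ) := by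
  simp only [glue, mem_insert, mem_singleton]
  split_ifs <;> omega

theorem card_fiberValues_glue_le (a b : V → ℕ) (i : ℕ) :
    #(fiberValues (glue i ∘ a) (glue i ∘ b) i) ≤
      #(fiberValues a b i) + #(fiberValues a b (i + 1)) := by
  refine le_trans (card_le_card (t := (fiberValues a b i ∪ fiberValues a b (i + 1)).image (glue i))
    fun z hz => ?_) (card_image_le.trans (card_union_le _ _))
  obtain ⟨v, hv, rfl⟩ := mem_fiberValues.1 hz
  refine mem_image_of_mem _ (mem_union.2 ?_)
  have hav : a v = i ∨ a v = i + 1 := by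
    simpa [show glue i (a v) = i from hv] using mem_pair_glue i (a v)
  exact hav.imp (fun hav => mem_fiberValues.2 ⟨v, hav, rfl⟩)
    fun hav => mem_fiberValues.2 ⟨v, hav, rfl⟩

theorem card_fiberValues_glue_le_of_forall (b : V → ℕ) {i k k' : ℕ}
    (hk : ∀ x, glue i x = k → x = k') :
    #(fiberValues (glue i ∘ a) (glue i ∘ b) k) ≤ #(fiberValues a b k') := by
  refine le_trans (card_le_card fun z hz => ?_) (card_image_le (f := glue i))
  obtain ⟨v, hv, rfl⟩ := mem_fiberValues.1 hz
  exact mem_image_of_mem _ (mem_fiberValues.2 ⟨v, hk _ hv, rfl⟩)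

theorem exists_forall_glue_eq_imp {i k : ℕ} (hk : k ≠ i) : ∃ k', ∀ x, glue i x = k → x = k' := by
  refine ⟨if k < i then k else k + 1, fun x hx => ?_⟩
  unfold glue at hx
  split_ifs at hx ⊢ <;> omega

theorem IsCoarseRep.glue_comp {i : ℕ} (h : IsCoarseRep G D a b)
    (hrow : #(fiberValues a b i) + #(fiberValues a b (i + 1)) ≤ D)
    (hcol : #(fiberValues b a i) + #(fiberValues b a (i + 1)) ≤ D) :
    IsCoarseRep G D (glue i ∘ a) (glue i ∘ b) where
  not_adj u v huv := h.not_adj u v ((glue_mono i).reflect_lt huv)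
  adj u v huv hvu huv' :=
    h.adj u v huv ((glue_mono i).reflect_lt hvu) ((glue_mono i).reflect_lt huv')
  card_row_le k hclean := by
    rcases eq_or_ne k i with rfl | hk
    · exact (card_fiberValues_glue_le a b k).trans hrow
    · obtain ⟨k', hk'⟩ := exists_forall_glue_eq_imp hk
      exact (card_fiberValues_glue_le_of_forall b hk').trans (h.card_row_le k' fun h' =>
        hclean fun u v huv hu hv => h' u v huv (hk' _ hu) (hk' _ hv))
  card_col_le k hclean := by
    rcases eq_or_ne k i with rfl | hk
    · exact (card_fiberValues_glue_le b a k).trans hcol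
    · obtain ⟨k', hk'⟩ := exists_forall_glue_eq_imp hk
      exact (card_fiberValues_glue_le_of_forall a hk').trans (h.card_col_le k' fun h' =>
        hclean fun u v huv hu hv => h' u v huv (hk' _ hu) (hk' _ hv))

theorem sum_card_fiberValues {n : ℕ} (ha : ∀ v, a v < n) :
    ∑ k ∈ range n, #(fiberValues a b k) = #(cells a b) := by
  have hcells : ∀ z ∈ cells a b, z.1 ∈ range n := by simp [cells, ha]
  rw [card_eq_sum_card_fiberwise hcells]
  refine sum_congr rfl fun k _ => ?_
  rw [← card_image_of_injective (fiberValues a b k) (Prod.mk_right_injective k)]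
  congr 1
  ext ⟨x, y⟩
  simp only [cells, mem_image, mem_fiberValues, mem_filter, mem_univ, true_and, Prod.mk.injEq]
  aesop

theorem card_cells_swap (a b : V → ℕ) : #(cells b a) = #(cells a b) := by
  rw [← card_image_of_injective (cells a b) Prod.swap_injective, cells, cells, image_image]
  rfl

theorem exists_consecutive_add_le {w : ℕ → ℕ} {q c : ℕ}
    (h : ∑ k ∈ range (q + 2), w k ≤ c * (q + 2)) : ∃ i ≤ q, w i + w (i + 1) ≤ 4 * c := by
  have hsum : ∑ k ∈ range (q + 1), (w k + w (k + 1)) ≤ ∑ k ∈ range (q + 1), 4 * c := by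
    have hleft := sum_range_succ w (q + 1)
    have hright := sum_range_succ' w (q + 1)
    rw [sum_add_distrib, sum_const, card_range, smul_eq_mul]
    nlinarith
  simpa [Nat.lt_succ_iff] using exists_le_of_sum_le (nonempty_range_iff.2 q.succ_ne_zero) hsum

theorem exists_light_labels {q C : ℕ} (ha : ∀ v, a v < q + 2) (hb : ∀ v, b v < q + 2)
    (h : #(cells a b) ≤ C * (q + 2)) :
    ∃ i ≤ q, #(fiberValues a b i) + #(fiberValues a b (i + 1)) ≤ 8 * C ∧
      #(fiberValues b a i) + #(fiberValues b a (i + 1)) ≤ 8 * C := by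
  obtain ⟨i, hi, hle⟩ := exists_consecutive_add_le
    (w := fun k => #(fiberValues a b k) + #(fiberValues b a k)) (q := q) (c := 2 * C) (by
      rw [sum_add_distrib, sum_card_fiberValues ha, sum_card_fiberValues hb, card_cells_swap a b]
      linarith)
  exact ⟨i, hi, by omega, by omega⟩

end CoarseRepresentation

section UpperBound

variable {V : Type} [Fintype V] {G : SimpleGraph V} {a b : V → ℕ} {D k : ℕ}

theorem IsCoarseRep.isHomog_or (h : IsCoarseRep G D a b) {A B : Finset V} (hAB : Disjoint A B)
    {x y : V} (hA : ∀ u ∈ A, a u = a x ∧ b u = b x) (hB : ∀ v ∈ B, a v = a y ∧ b v = b y) :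
    IsHomog G A B ∨ (a y = b x ∧ ¬ CleanAt G a b (b x)) ∨ (b y = a x ∧ ¬ CleanAt G a b (a x)) := by
  have hne : ∀ u ∈ A, ∀ v ∈ B, u ≠ v := fun u hu v hv => disjoint_iff_ne.1 hAB u hu v hv
  rcases lt_trichotomy (b x) (a y) with hxy | hxy | hxy
  · exact .inl (.inr fun u hu v hv => h.not_adj u v (by rwa [(hA u hu).2, (hB v hv).1]))
  · by_cases hclean : CleanAt G a b (b x)
    · exact .inl (.inl fun u hu v hv =>
        hclean u v (hne u hu v hv) (hA u hu).2 ((hB v hv).1.trans hxy.symm))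
    · exact .inr (.inl ⟨hxy.symm, hclean⟩)
  rcases lt_trichotomy (b y) (a x) with hyx | hyx | hyx
  · exact .inl (.inr fun u hu v hv hadj =>
      h.not_adj v u (by rwa [(hA u hu).1, (hB v hv).2]) hadj.symm)
  · by_cases hclean : CleanAt G a b (a x)
    · exact .inl (.inl fun u hu v hv =>
        (hclean v u (hne u hu v hv).symm ((hB v hv).2.trans hyx) (hA u hu).1).symm)
    · exact .inr (.inr ⟨hyx, hclean⟩)
  · exact .inl (.inl fun u hu v hv => h.adj u v (hne u hu v hv)
      (by rwa [(hA u hu).2, (hB v hv).1]) (by rwa [(hA u hu).1, (hB v hv).2]))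

theorem IsCoarseRep.exists_conflict_cells (h : IsCoarseRep G D a b) (x : V) :
    ∃ F : Finset (ℕ × ℕ), #F ≤ 2 * D ∧ ∀ y,
      (a y = b x ∧ ¬ CleanAt G a b (b x)) ∨ (b y = a x ∧ ¬ CleanAt G a b (a x)) →
        (a y, b y) ∈ F := by
  obtain ⟨F₁, hF₁, hrow⟩ : ∃ F₁ : Finset (ℕ × ℕ), #F₁ ≤ D ∧
      ∀ y, a y = b x ∧ ¬ CleanAt G a b (b x) → (a y, b y) ∈ F₁ := by
    by_cases hclean : CleanAt G a b (b x)
    · exact ⟨∅, by simp, fun y hy => absurd hclean hy.2⟩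
    · exact ⟨(fiberValues a b (b x)).image (b x, ·), card_image_le.trans (h.card_row_le _ hclean),
        fun y hy => hy.1 ▸ mem_image_of_mem _ (mem_fiberValues.2 ⟨y, rfl, rfl⟩)⟩
  obtain ⟨F₂, hF₂, hcol⟩ : ∃ F₂ : Finset (ℕ × ℕ), #F₂ ≤ D ∧
      ∀ y, b y = a x ∧ ¬ CleanAt G a b (a x) → (a y, b y) ∈ F₂ := by
    by_cases hclean : CleanAt G a b (a x)
    · exact ⟨∅, by simp, fun y hy => absurd hclean hy.2⟩
    · exact ⟨(fiberValues b a (a x)).image (·, a x), card_image_le.trans (h.card_col_le _ hclean),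
        fun y hy => hy.1 ▸ mem_image_of_mem _ (mem_fiberValues.2 ⟨y, rfl, rfl⟩)⟩
  exact ⟨F₁ ∪ F₂, (card_union_le _ _).trans (by omega), fun y hy =>
    hy.elim (fun hy => mem_union_left _ (hrow y hy)) fun hy => mem_union_right _ (hcol y hy)⟩

variable [DecidableEq V] {R : Finpartition (univ : Finset V)} {A : Finset V}

theorem card_le_of_fiberPartition_le {β : Type*} [DecidableEq β] {f : V → β}
    (hR : fiberPartition f ≤ R) {s : Finset (Finset V)} (hs : s ⊆ R.parts) {T : Finset β}
    (hT : ∀ B ∈ s, ∃ y ∈ B, f y ∈ T) : #s ≤ #T := by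
  refine card_le_card_of_forall_subsingleton (fun B z => ∃ y ∈ B, f y = z)
    (fun B hB => ?_) fun z _ B hB B' hB' => ?_
  · obtain ⟨y, hy, hyT⟩ := hT B hB
    exact ⟨f y, hyT, y, hy, rfl⟩
  · obtain ⟨hB, y, hy, hyz⟩ := hB
    obtain ⟨hB', y', hy', hyz'⟩ := hB'
    exact eq_of_fiberPartition_le hR (hs hB) (hs hB') hy hy' (hyz.trans hyz'.symm)

theorem IsIntervalRep.redDegree_eq_zero (h : IsIntervalRep G a b)
    (hR : R ≤ fiberPartition fun v => (a v, b v)) (hA : A ∈ R.parts) : redDegree G R A = 0 := by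
  classical
  rw [redDegree_eq_card]
  refine card_eq_zero.2 (filter_eq_empty_iff.2 fun B hB => not_not.2 ?_)
  obtain ⟨hBA, hB⟩ := mem_erase.1 hB
  obtain ⟨x, hx⟩ := R.nonempty_of_mem_parts hA
  obtain ⟨y, hy⟩ := R.nonempty_of_mem_parts hB
  rcases (h.isCoarseRep 0).isHomog_or (R.disjoint hA hB hBA.symm)
    (fun u hu => Prod.mk.inj (eq_of_le_fiberPartition hR hA hu hx))
    (fun v hv => Prod.mk.inj (eq_of_le_fiberPartition hR hB hv hy)) with hom | ⟨-, hk⟩ | ⟨-, hk⟩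
  · exact hom
  · exact absurd (h.cleanAt _) hk
  · exact absurd (h.cleanAt _) hk

theorem IsCoarseRep.redDegree_le {i : ℕ} (h : IsCoarseRep G D (glue i ∘ a) (glue i ∘ b))
    (hle : fiberPartition (fun v => (a v, b v)) ≤ R)
    (hge : R ≤ fiberPartition fun v => (glue i (a v), glue i (b v))) (hA : A ∈ R.parts) :
    redDegree G R A ≤ 8 * D := by
  classical
  rw [redDegree_eq_card]
  obtain ⟨x, hx⟩ := R.nonempty_of_mem_parts hA
  obtain ⟨F, hF, hmemF⟩ := h.exists_conflict_cells x
  let T := F.biUnion fun z => ({z.1, z.1 + 1} : Finset ℕ) ×ˢ ({z.2, z.2 + 1} : Finset ℕ)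
  have hT : #T ≤ #F * 4 := card_biUnion_le_card_mul _ _ _ fun z _ => by simp
  refine le_trans (card_le_of_fiberPartition_le hle
    ((filter_subset _ _).trans (erase_subset _ _)) (T := T) fun B hB => ?_) (by omega)
  obtain ⟨hB, hhom⟩ := mem_filter.1 hB
  obtain ⟨hBA, hB⟩ := mem_erase.1 hB
  obtain ⟨y, hy⟩ := R.nonempty_of_mem_parts hB
  have hconflict := (h.isHomog_or (R.disjoint hA hB hBA.symm)
    (fun u hu => Prod.mk.inj (eq_of_le_fiberPartition hge hA hu hx))
    (fun v hv => Prod.mk.inj (eq_of_le_fiberPartition hge hB hv hy))).resolve_left hhom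
  exact ⟨y, hy, mem_biUnion.2
    ⟨_, hmemF y hconflict, mem_product.2 ⟨mem_pair_glue i _, mem_pair_glue i _⟩⟩⟩

theorem IsCoarseRep.exists_contractsTo {q : ℕ} (ha : ∀ v, a v ≤ q) (hb : ∀ v, b v ≤ q)
    (hgrid : ¬ HasGridMinor (k + 1) a b) (h : IsCoarseRep G (8 * marcusTardosConst k) a b) :
    ∃ Q : Finpartition (univ : Finset V), #Q.parts ≤ 1 ∧
      ContractsTo G (64 * marcusTardosConst k) (fiberPartition fun v => (a v, b v)) Q := by
  induction q generalizing a b with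
  | zero =>
    refine ⟨_, card_parts_fiberPartition_le_one fun u v => ?_, .refl⟩
    rw [Nat.le_zero.1 (ha u), Nat.le_zero.1 (ha v), Nat.le_zero.1 (hb u), Nat.le_zero.1 (hb v)]
  | succ q ih =>
    have ha' : ∀ v, a v < q + 2 := fun v => Nat.lt_succ_of_le (ha v)
    have hb' : ∀ v, b v < q + 2 := fun v => Nat.lt_succ_of_le (hb v)
    obtain ⟨i, hi, hrow, hcol⟩ :=
      exists_light_labels ha' hb' (card_cells_le_marcusTardosConst_mul ha' hb' hgrid)
    have hglue := h.glue_comp hrow hcol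
    have hlt : ∀ x ≤ q + 1, glue i x ≤ q := by
      intro x hx
      unfold glue
      split_ifs <;> omega
    obtain ⟨Q, hQ, hcontract⟩ := ih (fun v => hlt _ (ha v)) (fun v => hlt _ (hb v))
      (fun h' => hgrid (h'.of_monotone_comp (glue_mono i) (glue_mono i))) hglue
    refine ⟨Q, hQ, (contractsTo_of_le (fiberPartition_mono fun u v huv => ?_)
      fun R hle hge A hA => ?_).trans hcontract⟩
    · obtain ⟨hauv, hbuv⟩ := Prod.mk.inj huv
      simp only [hauv, hbuv]
    · exact (hglue.redDegree_le hle hge hA).trans (by omega)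

theorem IsIntervalRep.twinWidthLE (h : IsIntervalRep G a b)
    (hgrid : ¬ HasGridMinor (k + 1) a b) : TwinWidthLE G (64 * marcusTardosConst k) := by
  have hbound : ∀ f : V → ℕ, ∃ q, ∀ v, f v ≤ q := fun f =>
    ⟨univ.sup f, fun v => le_sup (mem_univ v)⟩
  obtain ⟨q, hq⟩ := hbound b
  obtain ⟨Q, hQ, hcontract⟩ := (h.isCoarseRep (8 * marcusTardosConst k)).exists_contractsTo
    (fun v => (h.le v).trans (hq v)) hq hgrid
  have hred : ∀ R : Finpartition univ, R ≤ fiberPartition (fun v => (a v, b v)) →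
      ∀ A ∈ R.parts, redDegree G R A ≤ 64 * marcusTardosConst k := fun R hR A hA =>
    (h.redDegree_eq_zero hR hA).trans_le (Nat.zero_le _)
  refine twinWidthLE_iff_contractsTo.2 ⟨⊥, Q, ?_, hQ, hred ⊥ bot_le,
    (contractsTo_of_le bot_le fun R _ hR => hred R hR).trans hcontract⟩
  simp [Finpartition.parts_bot]

end UpperBound

section TightRepresentation

variable {V : Type*} {G : SimpleGraph V}

/-- The number of elements of `s` below `x`. -/
def rankIn {α : Type*} [LinearOrder α] (s : Finset α) (x : α) : ℕ := #{y ∈ s | y < x}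

variable {α : Type*} [LinearOrder α] {s : Finset α} {a b : V → α}

theorem rankIn_mono (s : Finset α) : Monotone (rankIn s) := fun _ _ hxy =>
  card_le_card (monotone_filter_right s fun _ _ hz => hz.trans_le hxy)

theorem rankIn_lt_rankIn {x y : α} (hx : x ∈ s) (hxy : x < y) : rankIn s x < rankIn s y :=
  card_lt_card (ssubset_iff_of_subset (monotone_filter_right s fun _ _ hz => hz.trans hxy) |>.2
    ⟨x, mem_filter.2 ⟨hx, hxy⟩, by simp⟩)

theorem exists_mem_rankIn_eq {x z : α} (hz : z ∈ s) (hxz : x ≤ z) :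
    ∃ y ∈ s, rankIn s y = rankIn s x := by
  obtain ⟨y, hy, hmin⟩ := exists_min_image {y ∈ s | x ≤ y} id ⟨z, mem_filter.2 ⟨hz, hxz⟩⟩
  obtain ⟨hys, hxy⟩ := mem_filter.1 hy
  refine ⟨y, hys, congrArg card (filter_congr fun u hu => ⟨fun huy => ?_, hxy.trans_lt'⟩)⟩
  exact lt_of_not_ge fun hxu => huy.not_ge (hmin u (mem_filter.2 ⟨hu, hxu⟩))

theorem IsIntervalRep.dual (h : IsIntervalRep G a b) :
    IsIntervalRep G (OrderDual.toDual ∘ b) (OrderDual.toDual ∘ a) where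
  le := h.le
  adj_iff u v huv := (h.adj_iff u v huv).trans and_comm

theorem IsIntervalRep.exists_comp_range_subset [Finite V] (h : IsIntervalRep G a b) :
    ∃ ρ : α → ℕ, IsIntervalRep G (ρ ∘ a) (ρ ∘ b) ∧ Set.range (ρ ∘ a) ⊆ Set.range (ρ ∘ b) := by
  cases nonempty_fintype V
  have hb v : b v ∈ univ.image b := mem_image_of_mem b (mem_univ v)
  have hρ u v : a u ≤ b v ↔ rankIn (univ.image b) (a u) ≤ rankIn (univ.image b) (b v) :=
    ⟨fun huv => rankIn_mono _ huv, fun huv => le_of_not_gt fun hvu =>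
      huv.not_gt (rankIn_lt_rankIn (hb v) hvu)⟩
  refine ⟨rankIn (univ.image b), ⟨fun v => (hρ v v).1 (h.le v), fun u v huv => ?_⟩, ?_⟩
  · rw [h.adj_iff u v huv, hρ, hρ, Function.comp_def, Function.comp_def]
  · rintro _ ⟨v, rfl⟩
    obtain ⟨y, hy, hyv⟩ := exists_mem_rankIn_eq (hb v) (h.le v)
    obtain ⟨u, -, rfl⟩ := mem_image.1 hy
    exact ⟨u, hyv⟩

theorem IsIntervalRep.exists_range_eq [Finite V] (h : IsIntervalRep G a b) :
    ∃ a' b' : V → ℕ, IsIntervalRep G a' b' ∧ Set.range a' = Set.range b' := by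
  obtain ⟨ρ, hρ, hab⟩ := h.exists_comp_range_subset
  obtain ⟨σ, hσ, hba⟩ := hρ.dual.exists_comp_range_subset
  refine ⟨_, _, hσ, hba.antisymm ?_⟩
  have hdual := Set.image_mono (f := σ ∘ OrderDual.toDual) hab
  rwa [← Set.range_comp, ← Set.range_comp] at hdual

theorem IsIntervalGraph.exists_isIntervalRep {n : ℕ} {G : SimpleGraph (Fin n)}
    (h : IsIntervalGraph G) : ∃ l r : Fin n → ℚ, IsIntervalRep G l r := by
  obtain ⟨l, r, hle, hadj⟩ := h
  refine ⟨l, r, hle, fun u v huv => ?_⟩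
  rw [hadj u v huv, max_le_iff, le_min_iff, le_min_iff]
  exact ⟨fun h => ⟨h.1.2, h.2.1⟩, fun h => ⟨⟨hle u, h.1⟩, h.2, hle v⟩⟩

end TightRepresentation

section HalfGraph

variable {ι V : Type*} {G : SimpleGraph V} {u x : ι → V}

/-- The vertices `u i` and `x i` span a half graph: the `x`-neighbours of `u i` are the `x j` with
`j ≤ i`. Edges within `u` and within `x` are arbitrary. -/
def IsHalfGraph [LE ι] (G : SimpleGraph V) (u x : ι → V) : Prop :=
  ∀ i j, G.Adj (u i) (x j) ↔ j ≤ i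

theorem IsHalfGraph.dual [LE ι] (h : IsHalfGraph G u x) :
    IsHalfGraph G (x ∘ OrderDual.ofDual) (u ∘ OrderDual.ofDual) :=
  fun i j => (G.adj_comm _ _).trans (h j.ofDual i.ofDual)

theorem IsHalfGraph.right_injective [PartialOrder ι] (h : IsHalfGraph G u x) :
    Function.Injective x := fun i j hij =>
  le_antisymm ((h j i).1 (hij ▸ (h j j).2 le_rfl)) ((h i j).1 (hij ▸ (h i i).2 le_rfl))

theorem IsHalfGraph.left_injective [PartialOrder ι] (h : IsHalfGraph G u x) :
    Function.Injective u :=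
  h.dual.right_injective

theorem IsHalfGraph.neighborSet_inter_range [LE ι] (h : IsHalfGraph G u x) (i : ι) :
    G.neighborSet (u i) ∩ Set.range x = x '' {j | j ≤ i} := by
  ext z
  constructor
  · rintro ⟨hz, j, rfl⟩
    exact ⟨j, (h i j).1 hz, rfl⟩
  · rintro ⟨j, hj, rfl⟩
    exact ⟨(h i j).2 hj, j, rfl⟩

theorem IsHalfGraph.nonempty_neighborSet_inter [Preorder ι] (h : IsHalfGraph G u x) (i : ι) :
    (G.neighborSet (u i) ∩ Set.range x).Nonempty :=
  ⟨x i, (h i i).2 le_rfl, i, rfl⟩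

theorem IsHalfGraph.neighborSet_inter_ssubset [PartialOrder ι] (h : IsHalfGraph G u x) {i j : ι}
    (hij : i < j) : G.neighborSet (u i) ∩ Set.range x ⊂ G.neighborSet (u j) ∩ Set.range x := by
  rw [h.neighborSet_inter_range, h.neighborSet_inter_range]
  exact h.right_injective.image_strictMono (Set.Iic_ssubset_Iic.2 hij)

theorem exists_forall_mem_iff_le [LinearOrder ι] [PredOrder ι] {s : ι → Set V} (hs : StrictMono s)
    (hne : ∀ i, (s i).Nonempty) : ∃ x : ι → V, ∀ i j, x j ∈ s i ↔ j ≤ i := by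
  have hnew : ∀ j, ∃ z ∈ s j, ∀ i < j, z ∉ s i := by
    intro j
    by_cases hj : IsMin j
    · obtain ⟨z, hz⟩ := hne j
      exact ⟨z, hz, fun i hi => (hj.not_lt hi).elim⟩
    · obtain ⟨z, hz, hz'⟩ := Set.exists_of_ssubset (hs (Order.pred_lt_of_not_isMin hj))
      exact ⟨z, hz, fun i hi hzi => hz' (hs.monotone (Order.le_pred_of_lt hi) hzi)⟩
  choose x hx hx' using hnew
  exact ⟨x, fun i j => ⟨fun hij => le_of_not_gt fun hlt => hx' j i hlt hij,
    fun hij => hs.monotone hij (hx j)⟩⟩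

theorem exists_isHalfGraph_of_strictMono [LinearOrder ι] [PredOrder ι] {S : Set V}
    (hs : StrictMono fun i => G.neighborSet (u i) ∩ S)
    (hne : ∀ i, (G.neighborSet (u i) ∩ S).Nonempty) : ∃ x : ι → V, IsHalfGraph G u x := by
  obtain ⟨x, hx⟩ := exists_forall_mem_iff_le hs hne
  exact ⟨x, fun i j => ⟨fun hadj => (hx i j).1 ⟨hadj, ((hx j j).2 le_rfl).2⟩,
    fun hji => ((hx i j).2 hji).1⟩⟩

end HalfGraph

section Exposes

variable {p : ℕ} {π : Equiv.Perm (Fin p)}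

theorem Exposes.exists_isHalfGraph {V : Type} {H : SimpleGraph V} (h : Exposes H π) :
    ∃ w x y : Fin p → V, IsHalfGraph H w x ∧ IsHalfGraph H (w ∘ π) y := by
  obtain ⟨w, w₁, w₂, -, -, -, -, -, -, -, hne₁, hne₂, hlt₁, hlt₂⟩ := h
  obtain ⟨x, hx⟩ := exists_isHalfGraph_of_strictMono hlt₁ hne₁
  obtain ⟨y, hy⟩ := exists_isHalfGraph_of_strictMono (u := w ∘ π) hlt₂ fun i => hne₂ (π i)
  exact ⟨w, x, y, hx, hy⟩

theorem IsHalfGraph.exposes {V : Type} {H : SimpleGraph V} {w x y : Fin p → V}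
    (hx : IsHalfGraph H w x) (hy : IsHalfGraph H (w ∘ π) y)
    (hwx : Disjoint (Set.range w) (Set.range x)) (hwy : Disjoint (Set.range w) (Set.range y))
    (hxy : Disjoint (Set.range x) (Set.range y))
    (hcover : Set.range w ∪ Set.range x ∪ Set.range y = Set.univ) : Exposes H π :=
  ⟨w, x, y, hx.left_injective, hx.right_injective, hy.right_injective, hwx, hwy, hxy, hcover,
    hx.nonempty_neighborSet_inter,
    fun i => π.apply_symm_apply i ▸ hy.nonempty_neighborSet_inter (π.symm i),
    fun _ _ => hx.neighborSet_inter_ssubset, fun _ _ => hy.neighborSet_inter_ssubset⟩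

theorem IsHalfGraph.exists_isInducedSubgraphOf_exposes {n : ℕ} {G : SimpleGraph (Fin n)}
    {w x y : Fin p → Fin n} (hx : IsHalfGraph G w x) (hy : IsHalfGraph G (w ∘ π) y)
    (hwx : Disjoint (Set.range w) (Set.range x)) (hwy : Disjoint (Set.range w) (Set.range y))
    (hxy : Disjoint (Set.range x) (Set.range y)) :
    ∃ (m : ℕ) (H : SimpleGraph (Fin m)), IsInducedSubgraphOf H G ∧ Exposes H π := by
  obtain ⟨m, f, hf⟩ : ∃ (m : ℕ) (f : Fin m ↪ Fin n),
      Set.range f = Set.range w ∪ Set.range x ∪ Set.range y := by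
    refine ⟨_, ((univ.image w ∪ univ.image x ∪ univ.image y).orderEmbOfFin rfl).toEmbedding, ?_⟩
    rw [RelEmbedding.coe_toEmbedding, range_orderEmbOfFin]
    simp only [coe_union, coe_image, coe_univ, Set.image_univ]
  obtain ⟨w, rfl⟩ : ∃ w', w = f ∘ w' :=
    Set.range_subset_range_iff_exists_comp.1 fun z hz => hf ▸ .inl (.inl hz)
  obtain ⟨x, rfl⟩ : ∃ x', x = f ∘ x' :=
    Set.range_subset_range_iff_exists_comp.1 fun z hz => hf ▸ .inl (.inr hz)
  obtain ⟨y, rfl⟩ : ∃ y', y = f ∘ y' :=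
    Set.range_subset_range_iff_exists_comp.1 fun z hz => hf ▸ .inr hz
  simp only [Set.range_comp f, Set.disjoint_image_iff f.injective] at hwx hwy hxy hf
  rw [← Set.image_union, ← Set.image_union, ← Set.image_univ] at hf
  exact ⟨m, G.comap f, ⟨f, fun _ _ => Iff.rfl⟩,
    IsHalfGraph.exposes hx hy hwx hwy hxy (Set.image_injective.2 f.injective hf.symm)⟩

theorem HasGridMinor.exists_strictMono_strictAnti {V α : Type*} [Preorder α] {a b : V → α}
    (h : HasGridMinor (p + 1) a b) (hle : ∀ v, a v ≤ b v) (π : Equiv.Perm (Fin p)) :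
    ∃ w : Fin p → V, StrictMono (b ∘ w) ∧ StrictAnti (a ∘ w ∘ π) ∧ ∀ s t, a (w s) < b (w t) := by
  obtain ⟨P, ha, hb⟩ := h
  refine ⟨fun s => P (π.symm s).rev.castSucc s.succ, fun s t hst => ?_, fun s t hst => ?_,
    fun s t => ?_⟩
  · exact hb _ _ _ _ (Fin.succ_lt_succ_iff.2 hst)
  · exact ha _ _ _ _ (by simpa using hst)
  -- The corner box `(last p, 0)` lies beyond all boxes used in `a` and before all of them in `b`.
  · calc
      _ < a (P (Fin.last p) 0) := ha _ _ _ _ (Fin.castSucc_lt_last _)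
      _ ≤ b (P (Fin.last p) 0) := hle _
      _ < _ := hb _ _ _ _ (Fin.succ_pos t)

theorem IsIntervalRep.adj_iff_of_lt {V α : Type*} [Preorder α] {G : SimpleGraph V} {a b : V → α}
    (h : IsIntervalRep G a b) {u v : V} (huv : a u < a v) : G.Adj u v ↔ a v ≤ b u := by
  rw [h.adj_iff u v (ne_of_apply_ne a huv.ne)]
  exact and_iff_right (huv.le.trans (h.le v))

theorem IsIntervalRep.exists_exposes {n : ℕ} {G : SimpleGraph (Fin n)} {a b : Fin n → ℕ}
    (h : IsIntervalRep G a b) (hrange : Set.range a = Set.range b)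
    (hgrid : HasGridMinor (p + 1) a b) (π : Equiv.Perm (Fin p)) :
    ∃ (m : ℕ) (H : SimpleGraph (Fin m)), IsInducedSubgraphOf H G ∧ Exposes H π := by
  obtain ⟨w, hbw, haw, hlt⟩ := hgrid.exists_strictMono_strictAnti h.le π
  choose x hx using fun t => hrange.ge (Set.mem_range_self (f := b) (w t))
  choose y hy using fun t => hrange.le (Set.mem_range_self (f := a) (w (π t)))
  refine IsHalfGraph.exists_isInducedSubgraphOf_exposes (w := w) (x := x) (y := y)
    (fun s t => ?_) (fun s t => ?_) ?_ ?_ ?_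
  · rw [h.adj_iff_of_lt (by rw [hx]; exact hlt s t), hx]
    exact hbw.le_iff_le
  · have hbt : b (y t) < b (w (π s)) := by rw [hy]; exact hlt _ _
    refine (h.dual.adj_iff_of_lt hbt).trans ?_
    change a (w (π s)) ≤ b (y t) ↔ t ≤ s
    rw [hy]
    exact haw.le_iff_ge
  all_goals
    rw [Set.disjoint_range_iff]
    intro s t hst
  · exact (hlt s t).ne (by rw [hst, hx])
  · exact (hlt (π t) s).ne (by rw [hst, hy])
  · exact (hlt (π t) s).not_ge (by rw [← hx, ← hy, ← hst]; exact h.le (x s))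

end Exposes

section Multiplicity

variable {V : Type} [Fintype V] [DecidableEq V] {G : SimpleGraph V} {ι : Type*} [Fintype ι]
  {P Q : Finpartition (univ : Finset V)} {z : ι → V} {m t : ℕ}

/-- Each part of the partition `P` contains at most `m` terms of the family `z`, counted with
multiplicity. -/
def MultiplicityLE (P : Finpartition (univ : Finset V)) (z : ι → V) (m : ℕ) : Prop :=
  ∀ A ∈ P.parts, #{i | z i ∈ A} ≤ m

theorem MultiplicityLE.mono {m' : ℕ} (h : MultiplicityLE P z m) (hm : m ≤ m') :
    MultiplicityLE P z m' :=
  fun A hA => (h A hA).trans hm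

theorem MultiplicityLE.comp_equiv {κ : Type*} [Fintype κ] (h : MultiplicityLE P z m) (e : κ ≃ ι) :
    MultiplicityLE P (z ∘ e) m := fun A hA =>
  (card_le_card_of_injOn e (by simp [Set.MapsTo]) e.injective.injOn).trans (h A hA)

theorem multiplicityLE_one_iff :
    MultiplicityLE P z 1 ↔ ∀ A ∈ P.parts, ∀ i j, z i ∈ A → z j ∈ A → i = j := by
  simp only [MultiplicityLE, card_le_one, mem_filter, mem_univ, true_and]
  grind

theorem multiplicityLE_one_of_injective (hP : ∀ A ∈ P.parts, #A = 1)
    (hz : Function.Injective z) : MultiplicityLE P z 1 :=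
  multiplicityLE_one_iff.2 fun A hA i j hi hj =>
    hz (card_le_one.1 (hP A hA).le (z i) hi (z j) hj)

theorem MultiplicityLE.card_le (h : MultiplicityLE P z m) (hP : #P.parts ≤ 1) :
    Fintype.card ι ≤ m := by
  rcases isEmpty_or_nonempty ι with hι | ⟨⟨i⟩⟩
  · simp
  obtain ⟨A, hA, -⟩ := P.exists_mem (mem_univ (z i))
  refine (card_le_card fun j _ => mem_filter.2 ⟨mem_univ j, ?_⟩).trans (h A hA)
  obtain ⟨B, hB, hj⟩ := P.exists_mem (mem_univ (z j))
  rwa [card_le_one.1 hP A hA B hB]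

theorem MultiplicityLE.of_isMerge (h : MultiplicityLE P z m) (hPQ : IsMerge P Q) :
    MultiplicityLE Q z (2 * m) := by
  classical
  obtain ⟨A, hA, B, hB, -, hQ⟩ := hPQ
  intro C hC
  rw [hQ] at hC
  rcases mem_insert.1 hC with rfl | hC
  · rw [filter_congr fun _ _ => mem_union, filter_or]
    linarith [card_union_le {i | z i ∈ A} {i | z i ∈ B}, h A hA, h B hB]
  · linarith [h C (mem_of_mem_erase (mem_of_mem_erase hC))]

theorem MultiplicityLE.card_le_of_mixed (h : MultiplicityLE P z m) {A : Finset V}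
    (hA : A ∈ P.parts) (hred : redDegree G P A ≤ t) {I : Finset ι}
    (hadj : ∀ i ∈ I, ∃ x ∈ A, G.Adj x (z i)) (hnadj : ∀ i ∈ I, ∃ x ∈ A, ¬ G.Adj x (z i)) :
    #I ≤ (t + 1) * m := by
  classical
  rw [redDegree_eq_card] at hred
  have hmaps : ∀ i ∈ I, P.part (z i) ∈ insert A {B ∈ P.parts.erase A | ¬ IsHomog G A B} := by
    intro i hi
    refine mem_insert.2 (or_iff_not_imp_left.2 fun hne => mem_filter.2
      ⟨mem_erase.2 ⟨hne, P.part_mem.2 (mem_univ _)⟩, ?_⟩)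
    obtain ⟨x, hx, hxz⟩ := hadj i hi
    obtain ⟨y, hy, hyz⟩ := hnadj i hi
    have hz : z i ∈ P.part (z i) := P.mem_part (mem_univ _)
    rintro (hall | hnone)
    · exact hyz (hall y hy _ hz)
    · exact hnone x hx _ hz hxz
  refine (card_le_mul_card_image_of_maps_to hmaps m fun B hB => ?_).trans ?_
  · have hBP : B ∈ P.parts :=
      (mem_insert.1 hB).elim (· ▸ hA) fun hB => mem_of_mem_erase (mem_filter.1 hB).1
    refine (card_le_card fun i hi => mem_filter.2 ⟨mem_univ i, ?_⟩).trans (h B hBP)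
    exact (mem_filter.1 hi).2 ▸ P.mem_part (mem_univ _)
  · rw [mul_comm]
    exact Nat.mul_le_mul_right m ((card_insert_le _ _).trans (Nat.succ_le_succ hred))

variable [LinearOrder ι] [LocallyFiniteOrder ι] {u x : ι → V}

-- For `i < k ≤ j` the vertex `x k` is adjacent to `u j` but not to `u i`.
theorem IsHalfGraph.card_Ioc_le (h : IsHalfGraph G u x) (hx : MultiplicityLE P x m) {A : Finset V}
    (hA : A ∈ P.parts) (hred : redDegree G P A ≤ t) {i j : ι} (hi : u i ∈ A) (hj : u j ∈ A) :
    #(Ioc i j) ≤ (t + 1) * m :=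
  hx.card_le_of_mixed hA hred
    (fun k hk => ⟨u j, hj, (h j k).2 (mem_Ioc.1 hk).2⟩)
    (fun k hk => ⟨u i, hi, fun hadj => (mem_Ioc.1 hk).1.not_ge ((h i k).1 hadj)⟩)

theorem IsHalfGraph.multiplicityLE_left (h : IsHalfGraph G u x) (hx : MultiplicityLE P x m)
    (hred : ∀ A ∈ P.parts, redDegree G P A ≤ t) : MultiplicityLE P u ((t + 1) * m + 1) := by
  intro A hA
  rcases ({i | u i ∈ A} : Finset ι).eq_empty_or_nonempty with hempty | hne
  · simp [hempty]
  have hmem := fun i (hi : i ∈ ({i | u i ∈ A} : Finset ι)) => (mem_filter.1 hi).2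
  have hsub : ({i | u i ∈ A} : Finset ι) ⊆ insert (min' _ hne) (Ioc (min' _ hne) (max' _ hne)) := by
    rw [Ioc_insert_left (min'_le_max' _ _)]
    exact fun i hi => mem_Icc.2 ⟨min'_le _ i hi, le_max' _ i hi⟩
  exact ((card_le_card hsub).trans (card_insert_le _ _)).trans (Nat.succ_le_succ
    (h.card_Ioc_le hx hA (hred A hA) (hmem _ (min'_mem _ _)) (hmem _ (max'_mem _ _))))

theorem IsHalfGraph.multiplicityLE_right (h : IsHalfGraph G u x) (hu : MultiplicityLE P u m)
    (hred : ∀ A ∈ P.parts, redDegree G P A ≤ t) : MultiplicityLE P x ((t + 1) * m + 1) :=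
  h.dual.multiplicityLE_left hu hred

end Multiplicity

section SpreadPermutation

/-- The permutation `π` moves any two distinct points at distance at most `L` to points at distance
more than `L`. -/
def IsSpread {p : ℕ} (π : Equiv.Perm (Fin p)) (L : ℕ) : Prop :=
  ∀ i j : Fin p, |(i : ℤ) - j| ≤ L → |(π i : ℤ) - π j| ≤ L → i = j

-- Transpose a `k × k` matrix of size `k = 2 * L + 2`, read row by row. Entries `x` rows and `y`
-- columns apart have distances `|y + k * x|` and `|x + k * y|`, and the sum and difference of these
-- two integers are multiples of `k + 1` and `k - 1`, both larger than `2 * L`.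
theorem exists_isSpread (L : ℕ) : ∃ p, 1 < p ∧ ∃ π : Equiv.Perm (Fin p), IsSpread π L := by
  let k := 2 * L + 2
  let e : Fin k × Fin k ≃ Fin (k * k) := finProdFinEquiv
  have he : ∀ z, (e z : ℤ) = z.2 + k * z.1 := fun z => by simp [e, finProdFinEquiv]
  refine ⟨k * k, by dsimp only [k]; nlinarith, e.symm.trans ((Equiv.prodComm _ _).trans e), ?_⟩
  intro i j hij hπ
  obtain ⟨⟨r, c⟩, rfl⟩ := e.surjective i
  obtain ⟨⟨r', c'⟩, rfl⟩ := e.surjective j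
  simp only [Equiv.trans_apply, Equiv.symm_apply_apply, Equiv.prodComm_apply, Prod.swap_prod_mk, he,
    abs_le] at hij hπ
  have hk : (k : ℤ) = 2 * L + 2 := by simp [k]
  have hsum : (k + 1) * ((r - r') + (c - c') : ℤ) = 0 :=
    Int.eq_zero_of_abs_lt_dvd (dvd_mul_right _ _) (abs_lt.2 ⟨by linarith, by linarith⟩)
  have hdiff : (k - 1) * ((r - r') - (c - c') : ℤ) = 0 :=
    Int.eq_zero_of_abs_lt_dvd (dvd_mul_right _ _) (abs_lt.2 ⟨by linarith, by linarith⟩)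
  have hsum := (mul_eq_zero.1 hsum).resolve_left (by omega)
  have hdiff := (mul_eq_zero.1 hdiff).resolve_left (by omega)
  rw [show r = r' by omega, show c = c' by omega]

end SpreadPermutation

section LowerBound

variable {V : Type} [Fintype V] [DecidableEq V] {G : SimpleGraph V} {p t m : ℕ}
  {P Q : Finpartition (univ : Finset V)} {π : Equiv.Perm (Fin p)} {u w x y : Fin p → V}

theorem IsHalfGraph.abs_sub_le (h : IsHalfGraph G u x) (hx : MultiplicityLE P x m) {A : Finset V}
    (hA : A ∈ P.parts) (hred : redDegree G P A ≤ t) {i j : Fin p} (hi : u i ∈ A) (hj : u j ∈ A) :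
    |(i : ℤ) - j| ≤ ((t + 1) * m : ℕ) := by
  have hij := h.card_Ioc_le hx hA hred hi hj
  have hji := h.card_Ioc_le hx hA hred hj hi
  rw [Fin.card_Ioc] at hij hji
  rw [abs_le]
  omega

theorem IsSpread.multiplicityLE_one (hπ : IsSpread π ((t + 1) * m))
    (hx : IsHalfGraph G w x) (hy : IsHalfGraph G (w ∘ π) y)
    (hmx : MultiplicityLE P x m) (hmy : MultiplicityLE P y m)
    (hred : ∀ A ∈ P.parts, redDegree G P A ≤ t) : MultiplicityLE P (w ∘ π) 1 :=
  multiplicityLE_one_iff.2 fun A hA i j hi hj =>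
    hπ i j (hy.abs_sub_le hmy hA (hred A hA) hi hj) (hx.abs_sub_le hmx hA (hred A hA) hi hj)

theorem ContractsTo.multiplicityLE_one (h : ContractsTo G t P Q)
    (hπ : IsSpread π ((t + 1) * (2 * (2 * t + 3))))
    (hx : IsHalfGraph G w x) (hy : IsHalfGraph G (w ∘ π) y) (hP : ∀ A ∈ P.parts, #A = 1) :
    MultiplicityLE Q (w ∘ π) 1 := by
  suffices MultiplicityLE Q (w ∘ π) 1 ∧ MultiplicityLE Q x (2 * t + 3) ∧
    MultiplicityLE Q y (2 * t + 3) from this.1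
  induction h with
  | refl =>
    exact ⟨multiplicityLE_one_of_injective hP hy.left_injective,
      (multiplicityLE_one_of_injective hP hx.right_injective).mono (by omega),
      (multiplicityLE_one_of_injective hP hy.right_injective).mono (by omega)⟩
  | @tail R S _ hstep ih =>
    obtain ⟨hmerge, hred⟩ := hstep
    obtain ⟨hw, hmx, hmy⟩ := ih
    have hwπ := hw.of_isMerge hmerge
    have hw : MultiplicityLE S w (2 * 1) := by
      simpa [Function.comp_assoc] using hwπ.comp_equiv π.symm
    exact ⟨hπ.multiplicityLE_one hx hy (hmx.of_isMerge hmerge) (hmy.of_isMerge hmerge) hred,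
      (hx.multiplicityLE_right hw hred).mono (by omega),
      (hy.multiplicityLE_right hwπ hred).mono (by omega)⟩

theorem TwinWidthLE.not_exposes (h : TwinWidthLE G t) (hp : 1 < p)
    (hπ : IsSpread π ((t + 1) * (2 * (2 * t + 3)))) : ¬ Exposes G π := by
  intro hexp
  obtain ⟨w, x, y, hx, hy⟩ := hexp.exists_isHalfGraph
  obtain ⟨P, Q, hP, hQ, -, hPQ⟩ := twinWidthLE_iff_contractsTo.1 h
  have hcard := (hPQ.multiplicityLE_one hπ hx hy hP).card_le hQ
  rw [Fintype.card_fin] at hcard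
  omega

end LowerBound

/-- A hereditary class of interval graphs has bounded twin-width iff for some
permutation `π` it contains no graph exposing `π`. -/
theorem stmt2 (C : ∀ n : ℕ, Set (SimpleGraph (Fin n)))
    (hher : Hereditary C)
    (hint : ∀ n : ℕ, ∀ G ∈ C n, IsIntervalGraph G) :
    (∃ t : ℕ, ∀ n : ℕ, ∀ G ∈ C n, TwinWidthLE G t) ↔
      (∃ p : ℕ, 1 ≤ p ∧ ∃ π : Equiv.Perm (Fin p),
        ∀ n : ℕ, ∀ G ∈ C n, ¬ Exposes G π) := by
  constructor
  · rintro ⟨t, ht⟩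
    obtain ⟨p, hp, π, hπ⟩ := exists_isSpread ((t + 1) * (2 * (2 * t + 3)))
    exact ⟨p, hp.le, π, fun n G hG => (ht n G hG).not_exposes hp hπ⟩
  · rintro ⟨p, -, π, hπ⟩
    refine ⟨64 * marcusTardosConst p, fun n G hG => ?_⟩
    obtain ⟨l, r, hlr⟩ := (hint n G hG).exists_isIntervalRep
    obtain ⟨a, b, hab, hrange⟩ := hlr.exists_range_eq
    refine hab.twinWidthLE fun hgrid => ?_
    obtain ⟨m, H, hHG, hH⟩ := hab.exists_exposes hrange hgrid π
    exact hπ m H (hher m n H G hG hHG) hH
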